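/- arXiv:math/0508379 — 2 statements merged into one kernel-verified Lean document; each statement's English description precedes it below -/
import Mathlib

section
/- Let L be an ideal lattice. An open subset of Spec L is quasi-compact if and only if it is of the form D(c) for some compact element c ∈ L. -/
open CompleteLattice TopologicalSpace

/-- An ideal lattice: a complete, compactly generated lattice with an associative
multiplication distributing over finite suprema, for which `⊤` is a compact
two-sided identity and products of compact elements are compact. -/
structure IsIdealLattice (α : Type*) [CompleteLattice α] [Mul α] : Prop where
  mul_assoc : ∀ a b c : α, a * b * c = a * (b * c)
  compactlyGenerated : ∀ a : α, a = sSup {b : α | b ≤ a ∧ IsCompactElement b}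
  mul_sup : ∀ a b c : α, a * (b ⊔ c) = a * b ⊔ a * c
  sup_mul : ∀ a b c : α, (a ⊔ b) * c = a * c ⊔ b * c
  top_compact : IsCompactElement (⊤ : α)
  top_mul : ∀ a : α, ⊤ * a = a
  mul_top : ∀ a : α, a * ⊤ = a
  compact_mul : ∀ a b : α, IsCompactElement a → IsCompactElement b → IsCompactElement (a * b)

/-- A prime element of an ideal lattice: `p ≠ ⊤` and `a * b ≤ p` implies `a ≤ p` or `b ≤ p`. -/
def IsPrimeElt {α : Type*} [CompleteLattice α] [Mul α] (p : α) : Prop :=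
  p ≠ ⊤ ∧ ∀ a b : α, a * b ≤ p → a ≤ p ∨ b ≤ p

/-- A semi-prime element of an ideal lattice: `b * b ≤ a` implies `b ≤ a`. -/
def IsSemiprimeElt {α : Type*} [CompleteLattice α] [Mul α] (a : α) : Prop :=
  ∀ b : α, b * b ≤ a → b ≤ a

/-- The prime spectrum of an ideal lattice: the set of prime elements. -/
def SpecL (α : Type*) [CompleteLattice α] [Mul α] : Type _ := {p : α // IsPrimeElt p}

/-- The Zariski-closed set `V(a) = {p ∈ Spec L : a ≤ p}`. -/
def zV {α : Type*} [CompleteLattice α] [Mul α] (a : α) : Set (SpecL α) := {p | a ≤ p.1}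

/-- The Zariski-open set `D(a) = {p ∈ Spec L : a ≰ p}`. -/
def zD {α : Type*} [CompleteLattice α] [Mul α] (a : α) : Set (SpecL α) := {p | ¬ a ≤ p.1}

/-- The Zariski topology on `SpecL α`: the open sets are exactly the sets `zD a`. -/
instance {α : Type*} [CompleteLattice α] [Mul α] : TopologicalSpace (SpecL α) :=
  TopologicalSpace.generateFrom {U : Set (SpecL α) | ∃ a : α, U = zD a}

namespace IsIdealLattice

variable {α : Type*} [CompleteLattice α] [Mul α]

theorem mul_mono_right (hL : IsIdealLattice α) (a : α) {b c : α} (h : b ≤ c) :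
    a * b ≤ a * c := by
  rw [← sup_eq_right.2 h, hL.mul_sup]
  exact le_sup_left

theorem mul_mono_left (hL : IsIdealLattice α) (c : α) {a b : α} (h : a ≤ b) :
    a * c ≤ b * c := by
  rw [← sup_eq_right.2 h, hL.sup_mul]
  exact le_sup_left

theorem mul_le_left (hL : IsIdealLattice α) (a b : α) : a * b ≤ a :=
  (hL.mul_mono_right a le_top).trans_eq (hL.mul_top a)

theorem mul_le_right (hL : IsIdealLattice α) (a b : α) : a * b ≤ b :=
  (hL.mul_mono_left b le_top).trans_eq (hL.top_mul b)

theorem sup_mul_sup_le (hL : IsIdealLattice α) (p a b : α) :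
    (p ⊔ a) * (p ⊔ b) ≤ p ⊔ a * b := by
  rw [hL.sup_mul, hL.mul_sup a]
  exact sup_le (le_sup_of_le_left (hL.mul_le_left _ _))
    (sup_le (le_sup_of_le_left (hL.mul_le_right _ _)) le_sup_right)

/-- Prime avoidance of a multiplicatively closed set of compact elements: an element above no
member of the set lies below a prime element above no member of the set. -/
theorem exists_isPrimeElt_of_forall_not_le (hL : IsIdealLattice α) {S : Set α}
    (hne : S.Nonempty) (hcomp : ∀ x ∈ S, IsCompactElement x)
    (hmul : ∀ x ∈ S, ∀ y ∈ S, x * y ∈ S) {a : α} (ha : ∀ x ∈ S, ¬ x ≤ a) :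
    ∃ p : α, IsPrimeElt p ∧ a ≤ p ∧ ∀ x ∈ S, ¬ x ≤ p := by
  obtain ⟨p, hap, hp⟩ := zorn_le_nonempty₀ {p : α | ∀ x ∈ S, ¬ x ≤ p}
    (fun C hC hchain y hy => ⟨sSup C, fun x hx hle => by
      obtain ⟨z, hz, hxz⟩ :=
        hcomp x hx C (sSup C) ⟨y, hy⟩ hchain.directedOn (_root_.isLUB_sSup C) hle
      exact hC hz x hx hxz, fun z hz => le_sSup hz⟩) a ha
  have exists_le_sup : ∀ b, ¬ b ≤ p → ∃ x ∈ S, x ≤ p ⊔ b := by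
    intro b hb
    by_contra! h
    exact hb (le_sup_right.trans (hp.2 h le_sup_left))
  refine ⟨p, ⟨?_, fun b c hbc => ?_⟩, hap, hp.1⟩
  · rintro rfl
    obtain ⟨x, hx⟩ := hne
    exact hp.1 x hx le_top
  · by_contra! h
    obtain ⟨x, hx, hxb⟩ := exists_le_sup b h.1
    obtain ⟨y, hy, hyc⟩ := exists_le_sup c h.2
    refine hp.1 _ (hmul x hx y hy) ?_
    calc x * y ≤ (p ⊔ b) * (p ⊔ c) := (hL.mul_mono_left _ hxb).trans (hL.mul_mono_right _ hyc)
      _ ≤ p ⊔ b * c := hL.sup_mul_sup_le p b c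
      _ ≤ p := sup_le le_rfl hbc

/-- If `D(c) ⊆ D(a)` with `c` compact, then some compact `x ≤ a` satisfies `D(c) ⊆ D(x)`. -/
theorem exists_isCompactElement_le_of_zD_subset (hL : IsIdealLattice α) {a c : α}
    (hc : IsCompactElement c) (h : zD c ⊆ zD a) :
    ∃ x : α, IsCompactElement x ∧ x ≤ a ∧ zD c ⊆ zD x := by
  by_contra! hx
  obtain ⟨p, hp, hap, hxp⟩ := hL.exists_isPrimeElt_of_forall_not_le
    (S := {x | IsCompactElement x ∧ zD c ⊆ zD x}) ⟨c, hc, subset_rfl⟩ (fun x hx => hx.1)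
    (fun x hx y hy => ⟨hL.compact_mul x y hx.1 hy.1, fun q hq hxy =>
      (q.2.2 x y hxy).elim (hx.2 hq) (hy.2 hq)⟩)
    (a := a) (fun x hxS hxa => hx x hxS.1 hxa hxS.2)
  exact h (a := (⟨p, hp⟩ : SpecL α)) (hxp c ⟨hc, subset_rfl⟩) hap

theorem zD_inter_zD (hL : IsIdealLattice α) (a b : α) : zD a ∩ zD b = zD (a * b) := by
  ext p
  refine ⟨fun h hab => (p.2.2 a b hab).elim h.1 h.2, fun h => ⟨fun ha => ?_, fun hb => ?_⟩⟩
  · exact h ((hL.mul_le_left a b).trans ha)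
  · exact h ((hL.mul_le_right a b).trans hb)

end IsIdealLattice

section Zariski

variable {α : Type*} [CompleteLattice α] [Mul α]

theorem zD_iSup {ι : Sort*} (f : ι → α) : zD (⨆ i, f i) = ⋃ i, zD (f i) := by
  ext p
  simp [zD]

theorem zD_top : zD (⊤ : α) = Set.univ :=
  Set.eq_univ_of_forall fun p h => p.2.1 (top_le_iff.1 h)

theorem isOpen_zD (a : α) : IsOpen (zD a) :=
  isOpen_generateFrom_of_mem ⟨a, rfl⟩

theorem IsIdealLattice.exists_eq_zD_of_isOpen (hL : IsIdealLattice α) {U : Set (SpecL α)}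
    (hU : IsOpen U) : ∃ a : α, U = zD a := by
  induction hU with
  | basic U hU => exact hU
  | univ => exact ⟨⊤, zD_top.symm⟩
  | inter U V _ _ hU hV =>
    obtain ⟨a, rfl⟩ := hU
    obtain ⟨b, rfl⟩ := hV
    exact ⟨a * b, hL.zD_inter_zD a b⟩
  | sUnion S _ hS =>
    choose f hf using hS
    refine ⟨⨆ U : S, f U U.2, ?_⟩
    rw [zD_iSup, Set.sUnion_eq_iUnion]
    exact Set.iUnion_congr fun U => hf U U.2

theorem IsIdealLattice.isCompact_zD (hL : IsIdealLattice α) {c : α} (hc : IsCompactElement c) :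
    IsCompact (zD c) := by
  refine isCompact_of_finite_subcover fun U hUo hcU => ?_
  choose f hf using fun i => hL.exists_eq_zD_of_isOpen (hUo i)
  simp only [hf, ← zD_iSup] at hcU ⊢
  obtain ⟨x, hx, hxf, hcx⟩ := hL.exists_isCompactElement_le_of_zD_subset hc hcU
  obtain ⟨t, ht⟩ :=
    CompleteLattice.IsCompactElement.exists_finset_of_le_iSup _ hx f hxf
  exact ⟨t, hcx.trans fun p hp hle => hp (ht.trans hle)⟩

theorem IsIdealLattice.exists_isCompactElement_eq_zD (hL : IsIdealLattice α) {a : α}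
    (ha : IsCompact (zD a)) : ∃ c : α, IsCompactElement c ∧ zD a = zD c := by
  have hsup : a = ⨆ b : {b : α | b ≤ a ∧ IsCompactElement b}, b.1 := by
    rw [← sSup_eq_iSup']
    exact hL.compactlyGenerated a
  obtain ⟨t, ht⟩ := ha.elim_finite_subcover
    (fun b : {b : α | b ≤ a ∧ IsCompactElement b} => zD b.1) (fun b => isOpen_zD b.1)
    ((congrArg zD hsup).trans (zD_iSup _)).subset
  refine ⟨t.sup (·.1), isCompactElement_finsetSup t fun b _ => b.2.2,
    Set.Subset.antisymm ?_ fun p hp hle => hp ((Finset.sup_le fun b _ => b.2.1).trans hle)⟩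
  simpa only [Finset.sup_eq_iSup, zD_iSup] using ht

end Zariski

/-- An open subset of `Spec L` is quasi-compact if and only if it is of the form `D(c)`
for some compact element `c ∈ L`. -/
theorem isCompact_open_iff_zD_compact {α : Type*} [CompleteLattice α] [Mul α]
    (hL : IsIdealLattice α) (U : Set (SpecL α)) (hU : IsOpen U) :
    IsCompact U ↔ ∃ c : α, IsCompactElement c ∧ U = zD c := by
  constructor
  · intro h
    obtain ⟨a, rfl⟩ := hL.exists_eq_zD_of_isOpen hU
    exact hL.exists_isCompactElement_eq_zD h
  · rintro ⟨c, hc, rfl⟩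
    exact hL.isCompact_zD hc
end

section
/- Let L be an ideal lattice such that the space Spec* L is noetherian. Then for every semi-prime a ∈ L there exists a unique set Ω of semi-prime elements of L such that: (1) supp(a) is the union of the supports supp(b) for b ∈ Ω, and these supports are pairwise disjoint and non-empty; and (2) each b ∈ Ω is indecomposable, in the sense that supp(b) cannot be written as a disjoint union of two non-empty subsets of Spec* L each of which is a union of closed subsets of Spec* L. -/
open CompleteLattice TopologicalSpace

/-- The set of prime elements of an ideal lattice, to be endowed with the `Spec*` topology. -/
def SpecStar (α : Type*) [CompleteLattice α] [Mul α] : Type _ := {p : α // IsPrimeElt p}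

/-- The support `supp(a) = {p ∈ Spec* L : a ≰ p}`. -/
def suppSet {α : Type*} [CompleteLattice α] [Mul α] (a : α) : Set (SpecStar α) :=
  {p | ¬ a ≤ p.1}

/-- The `Spec*` topology: the sets `supp(a)` for compact `a` form a basis of closed sets. -/
instance {α : Type*} [CompleteLattice α] [Mul α] : TopologicalSpace (SpecStar α) :=
  TopologicalSpace.generateFrom
    {U : Set (SpecStar α) | ∃ a : α, IsCompactElement a ∧ U = (suppSet a)ᶜ}

/-- A subset of `Spec* L` which is a union of closed subsets. -/
def IsUnionOfClosed {α : Type*} [CompleteLattice α] [Mul α]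
    (Y : Set (SpecStar α)) : Prop :=
  ∃ C : Set (Set (SpecStar α)), (∀ c ∈ C, IsClosed c) ∧ Y = ⋃₀ C

namespace IsIdealLattice

variable {α : Type*} [CompleteLattice α] [Mul α]

theorem mul_le_mul (hL : IsIdealLattice α) {a b c d : α} (hab : a ≤ b) (hcd : c ≤ d) :
    a * c ≤ b * d := by
  have h₁ : a * c ≤ b * c := by
    rw [← sup_eq_right.mpr hab, hL.sup_mul]
    exact le_sup_left
  have h₂ : b * c ≤ b * d := by
    rw [← sup_eq_right.mpr hcd, hL.mul_sup]
    exact le_sup_left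
  exact h₁.trans h₂

theorem le_of_forall_isCompactElement (hL : IsIdealLattice α) {a b : α}
    (h : ∀ c, IsCompactElement c → c ≤ a → c ≤ b) : a ≤ b := by
  rw [hL.compactlyGenerated a]
  exact sSup_le fun c hc => h c hc.2 hc.1

/-- An element maximal among those avoiding a descending sequence of iterated squares is prime. -/
theorem isPrimeElt_of_maximal_avoiding (hL : IsIdealLattice α) {s : ℕ → α}
    (hs : ∀ n, s (n + 1) = s n * s n) {p : α}
    (hp : Maximal (fun x => ∀ n, ¬ s n ≤ x) p) : IsPrimeElt p := by
  have hanti : Antitone s := antitone_nat_of_succ_le fun n => by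
    rw [hs]
    exact hL.mul_le_left _ _
  have hreach : ∀ x, ¬ x ≤ p → ∃ n, s n ≤ p ⊔ x := by
    intro x hx
    by_contra! hcon
    exact hx (le_sup_right.trans (hp.2 hcon le_sup_left))
  refine ⟨fun htop => hp.1 0 (htop ▸ le_top), fun x y hxy => ?_⟩
  by_contra! hcon
  obtain ⟨n, hn⟩ := hreach x hcon.1
  obtain ⟨m, hm⟩ := hreach y hcon.2
  apply hp.1 (max n m + 1)
  rw [hs]
  refine (hL.mul_le_mul ((hanti (le_max_left n m)).trans hn)
    ((hanti (le_max_right n m)).trans hm)).trans ?_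
  rw [hL.sup_mul, hL.mul_sup p, hL.mul_sup x]
  exact sup_le (sup_le (hL.mul_le_left _ _) (hL.mul_le_left _ _))
    (sup_le (hL.mul_le_right _ _) hxy)

theorem exists_prime_not_le (hL : IsIdealLattice α) {a c : α} (ha : IsSemiprimeElt a)
    (hc : IsCompactElement c) (hca : ¬ c ≤ a) : ∃ p, IsPrimeElt p ∧ a ≤ p ∧ ¬ c ≤ p := by
  let s : ℕ → α := fun n => (fun x => x * x)^[n] c
  have hs : ∀ n, s (n + 1) = s n * s n := fun n => Function.iterate_succ_apply' _ _ _
  have hsc : ∀ n, IsCompactElement (s n) := by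
    intro n
    induction n with
    | zero => exact hc
    | succ n ih => exact hs n ▸ hL.compact_mul _ _ ih ih
  have hsa : ∀ n, ¬ s n ≤ a := by
    intro n
    induction n with
    | zero => exact hca
    | succ n ih => exact fun h => ih (ha _ (hs n ▸ h))
  obtain ⟨p, hap, hp⟩ := zorn_le_nonempty₀ {x | ∀ n, ¬ s n ≤ x} (by
    intro C hC hchain y hy
    refine ⟨sSup C, fun n hn => ?_, fun z hz => le_sSup hz⟩
    obtain ⟨x, hx, hle⟩ := (isCompactElement_iff_le_of_directed_sSup_le α (s n)).mp (hsc n) C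
      ⟨y, hy⟩ hchain.directedOn hn
    exact hC hx n hle) a hsa
  exact ⟨p, hL.isPrimeElt_of_maximal_avoiding hs hp, hap, hp.1 0⟩

theorem le_of_suppSet_subset (hL : IsIdealLattice α) {a b : α} (hb : IsSemiprimeElt b)
    (h : suppSet a ⊆ suppSet b) : a ≤ b := by
  refine hL.le_of_forall_isCompactElement fun c hc hca => ?_
  by_contra hcb
  obtain ⟨p, hp, hbp, hcp⟩ := hL.exists_prime_not_le hb hc hcb
  exact h (a := ⟨p, hp⟩) (fun hap => hcp (hca.trans hap)) hbp

theorem suppSet_injOn (hL : IsIdealLattice α) :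
    Set.InjOn (suppSet (α := α)) {a | IsSemiprimeElt a} := fun _ ha _ hb h =>
  le_antisymm (hL.le_of_suppSet_subset hb h.subset) (hL.le_of_suppSet_subset ha h.superset)

theorem suppSet_mul (hL : IsIdealLattice α) (a b : α) :
    suppSet (a * b) = suppSet a ∩ suppSet b := by
  ext p
  constructor
  · exact fun h => ⟨fun ha => h ((hL.mul_le_left a b).trans ha),
      fun hb => h ((hL.mul_le_right a b).trans hb)⟩
  · exact fun h hab => (p.2.2 a b hab).elim h.1 h.2

end IsIdealLattice

section Support

variable {α : Type*} [CompleteLattice α] [Mul α]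

theorem suppSet_sSup (A : Set α) : suppSet (sSup A) = ⋃ a ∈ A, suppSet a := by
  ext p
  simp [suppSet]

theorem suppSet_sup (a b : α) : suppSet (a ⊔ b) = suppSet a ∪ suppSet b := by
  rw [← sSup_pair, suppSet_sSup, Set.biUnion_pair]

theorem suppSet_bot : suppSet (⊥ : α) = ∅ := by
  ext p
  simp [suppSet]

theorem suppSet_top : suppSet (⊤ : α) = Set.univ := by
  ext p
  simp [suppSet, p.2.1]

theorem isClosed_suppSet {a : α} (ha : IsCompactElement a) : IsClosed (suppSet a) :=
  ⟨TopologicalSpace.isOpen_generateFrom_of_mem ⟨a, ha, rfl⟩⟩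

/-- The largest element whose support is contained in `Y`. -/
noncomputable def semiprimeOfSet (Y : Set (SpecStar α)) : α :=
  sInf {x | ∃ p : SpecStar α, p ∉ Y ∧ x = p.1}

theorem isSemiprimeElt_semiprimeOfSet (Y : Set (SpecStar α)) :
    IsSemiprimeElt (semiprimeOfSet Y) := by
  intro b hb
  refine le_sInf ?_
  rintro _ ⟨p, hp, rfl⟩
  exact (p.2.2 b b (hb.trans (sInf_le ⟨p, hp, rfl⟩))).elim id id

theorem suppSet_semiprimeOfSet {Y : Set (SpecStar α)} (h : ∃ b, suppSet b = Y) :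
    suppSet (semiprimeOfSet Y) = Y := by
  obtain ⟨b, rfl⟩ := h
  refine Set.Subset.antisymm (fun p hp => ?_) (fun p hp hle => hp (le_trans (le_sInf ?_) hle))
  · by_contra hpb
    exact hp (sInf_le ⟨p, hpb, rfl⟩)
  · rintro _ ⟨q, hq, rfl⟩
    exact not_not.mp hq

theorem exists_suppSet_eq_of_isClosed [NoetherianSpace (SpecStar α)] (hL : IsIdealLattice α)
    {Y : Set (SpecStar α)} (hY : IsClosed Y) : ∃ b, suppSet b = Y := by
  suffices H : ∀ U : Set (SpecStar α), IsOpen U → ∃ b, suppSet b = Uᶜ by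
    simpa using H Yᶜ hY.isOpen_compl
  intro U hU
  induction hU with
  | basic U hU =>
    obtain ⟨a, -, rfl⟩ := hU
    exact ⟨a, (compl_compl _).symm⟩
  | univ => exact ⟨⊥, by rw [suppSet_bot, Set.compl_univ]⟩
  | inter U V _ _ ihU ihV =>
    obtain ⟨a, ha⟩ := ihU
    obtain ⟨b, hb⟩ := ihV
    exact ⟨a ⊔ b, by rw [suppSet_sup, ha, hb, Set.compl_inter]⟩
  | sUnion K hK ih =>
    obtain ⟨F, hFK, hF, hcover⟩ :=
      (NoetherianSpace.isCompact (⋃₀ K)).elim_finite_subcover_image (c := id) hK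
        Set.sUnion_eq_biUnion.subset
    have hFeq : ⋃₀ K = ⋃₀ F :=
      (hcover.trans Set.sUnion_eq_biUnion.superset).antisymm (Set.sUnion_subset_sUnion hFK)
    rw [hFeq]
    clear hcover hFeq
    induction F, hF using Set.Finite.induction_on with
    | empty => exact ⟨⊤, by rw [suppSet_top, Set.sUnion_empty, Set.compl_empty]⟩
    | @insert V F _ _ ihF =>
      obtain ⟨a, ha⟩ := ih V (hFK (Set.mem_insert V F))
      obtain ⟨b, hb⟩ := ihF ((Set.subset_insert V F).trans hFK)
      exact ⟨a * b, by rw [hL.suppSet_mul, ha, hb, Set.sUnion_insert, Set.compl_union]⟩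

theorem isUnionOfClosed_iff_specializes {Y : Set (SpecStar α)} :
    IsUnionOfClosed Y ↔ ∀ p ∈ Y, ∀ q, p ⤳ q → q ∈ Y := by
  constructor
  · rintro ⟨C, hC, rfl⟩ p ⟨c, hc, hp⟩ q hpq
    exact ⟨c, hc, hpq.mem_closed (hC c hc) hp⟩
  · intro h
    refine ⟨{c | ∃ p ∈ Y, c = closure {p}}, ?_, ?_⟩
    · rintro _ ⟨p, -, rfl⟩
      exact isClosed_closure
    · ext q
      constructor
      · exact fun hq => ⟨_, ⟨q, hq, rfl⟩, subset_closure rfl⟩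
      · rintro ⟨_, ⟨p, hp, rfl⟩, hq⟩
        exact h p hp q (specializes_iff_mem_closure.mpr hq)

theorem isUnionOfClosed_suppSet (hL : IsIdealLattice α) (b : α) :
    IsUnionOfClosed (suppSet b) := by
  refine ⟨suppSet '' {c | c ≤ b ∧ IsCompactElement c}, ?_, ?_⟩
  · rintro _ ⟨c, hc, rfl⟩
    exact isClosed_suppSet hc.2
  · rw [Set.sUnion_image, ← suppSet_sSup, ← hL.compactlyGenerated]

theorem IsUnionOfClosed.exists_suppSet_eq [NoetherianSpace (SpecStar α)]
    (hL : IsIdealLattice α) {Y : Set (SpecStar α)} (hY : IsUnionOfClosed Y) :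
    ∃ b, suppSet b = Y := by
  obtain ⟨C, hC, rfl⟩ := hY
  choose! f hf using fun c hc => exists_suppSet_eq_of_isClosed hL (hC c hc)
  refine ⟨sSup (f '' C), ?_⟩
  rw [suppSet_sSup, Set.biUnion_image, Set.sUnion_eq_biUnion]
  exact Set.iUnion₂_congr hf

theorem IsUnionOfClosed.inter {Y Z : Set (SpecStar α)} (hY : IsUnionOfClosed Y)
    (hZ : IsUnionOfClosed Z) : IsUnionOfClosed (Y ∩ Z) := by
  rw [isUnionOfClosed_iff_specializes] at *
  exact fun p hp q hpq => ⟨hY p hp.1 q hpq, hZ p hp.2 q hpq⟩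

/-- A set that is not a disjoint union of two non-empty unions of closed sets. -/
def IsIndecomposableSet (Y : Set (SpecStar α)) : Prop :=
  ¬ ∃ Y₁ Y₂ : Set (SpecStar α), IsUnionOfClosed Y₁ ∧ IsUnionOfClosed Y₂ ∧
    Y₁.Nonempty ∧ Y₂.Nonempty ∧ Disjoint Y₁ Y₂ ∧ Y = Y₁ ∪ Y₂

/-- The equivalence relation generated by specialization between points of `S`. -/
def Linked (S : Set (SpecStar α)) : SpecStar α → SpecStar α → Prop :=
  Relation.EqvGen fun p q => p ∈ S ∧ q ∈ S ∧ p ⤳ q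

/-- The connected component of `p` in `S` with respect to specialization. -/
def specComponent (S : Set (SpecStar α)) (p : SpecStar α) : Set (SpecStar α) :=
  {q | q ∈ S ∧ Linked S p q}

theorem mem_specComponent_self {S : Set (SpecStar α)} {p : SpecStar α} (hp : p ∈ S) :
    p ∈ specComponent S p :=
  ⟨hp, .refl p⟩

theorem specComponent_eq_of_linked {S : Set (SpecStar α)} {p q : SpecStar α}
    (h : Linked S p q) : specComponent S p = specComponent S q := by
  ext r
  exact and_congr_right fun _ => ⟨(h.symm _ _).trans _ _ _, h.trans _ _ _⟩

theorem isUnionOfClosed_specComponent {S : Set (SpecStar α)} (hS : IsUnionOfClosed S)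
    (p : SpecStar α) : IsUnionOfClosed (specComponent S p) := by
  rw [isUnionOfClosed_iff_specializes] at *
  intro q hq r hqr
  have hr := hS q hq.1 r hqr
  exact ⟨hr, hq.2.trans _ _ _ (.rel _ _ ⟨hq.1, hr, hqr⟩)⟩

theorem isIndecomposableSet_specComponent (S : Set (SpecStar α)) (p : SpecStar α) :
    IsIndecomposableSet (specComponent S p) := by
  rintro ⟨Y₁, Y₂, h₁, h₂, ⟨u, hu⟩, ⟨v, hv⟩, hdisj, heq⟩
  rw [isUnionOfClosed_iff_specializes] at h₁ h₂
  have key : ∀ x y, Linked S x y → Linked S p x → (x ∈ Y₁ ↔ y ∈ Y₁) := by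
    intro x y hxy
    induction hxy with
    | rel x y h =>
      intro hpx
      refine ⟨fun hx => h₁ x hx y h.2.2, fun hy => ?_⟩
      have hx : x ∈ Y₁ ∪ Y₂ := heq ▸ ⟨h.1, hpx⟩
      exact hx.resolve_right fun hx₂ => hdisj.notMem_of_mem_left hy (h₂ x hx₂ y h.2.2)
    | refl x => exact fun _ => Iff.rfl
    | symm x y h ih => exact fun hpy => (ih (hpy.trans _ _ _ (h.symm _ _))).symm
    | trans x y z h _ ih₁ ih₂ => exact fun hpx => (ih₁ hpx).trans (ih₂ (hpx.trans _ _ _ h))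
  have hpu : u ∈ specComponent S p := heq ▸ Or.inl hu
  have hpv : v ∈ specComponent S p := heq ▸ Or.inr hv
  have hv₁ := (key u v ((hpu.2.symm _ _).trans _ _ _ hpv.2) hpu.2).mp hu
  exact hdisj.notMem_of_mem_left hv₁ hv

/-- An indecomposable support covered by pairwise disjoint supports lies in each one it meets. -/
theorem suppSet_subset_of_indecomposable (hL : IsIdealLattice α) {b c : α} {Ω : Set α}
    (hb : IsIndecomposableSet (suppSet b))
    (hdisj : ∀ d ∈ Ω, d ≠ c → Disjoint (suppSet d) (suppSet c))
    (hcover : suppSet b ⊆ ⋃ d ∈ Ω, suppSet d) (hbc : (suppSet b ∩ suppSet c).Nonempty) :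
    suppSet b ⊆ suppSet c := by
  by_contra hsub
  have hrest : suppSet b \ suppSet c = suppSet b ∩ suppSet (sSup (Ω \ {c})) := by
    rw [suppSet_sSup]
    ext p
    refine and_congr_right fun hp => ⟨fun hpc => ?_, fun hpd => ?_⟩
    · obtain ⟨d, hd, hpd⟩ := Set.mem_iUnion₂.mp (hcover hp)
      exact Set.mem_biUnion ⟨hd, fun hdc => hpc (hdc ▸ hpd)⟩ hpd
    · obtain ⟨d, hd, hpd⟩ := Set.mem_iUnion₂.mp hpd
      exact (hdisj d hd.1 hd.2).notMem_of_mem_left hpd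
  refine hb ⟨suppSet b ∩ suppSet c, suppSet b \ suppSet c,
    (isUnionOfClosed_suppSet hL b).inter (isUnionOfClosed_suppSet hL c), ?_, hbc,
    Set.sdiff_nonempty.mpr hsub, Set.disjoint_sdiff_inter.symm, (Set.inter_union_sdiff _ _).symm⟩
  rw [hrest]
  exact (isUnionOfClosed_suppSet hL b).inter (isUnionOfClosed_suppSet hL _)

/-- `Ω` decomposes `a` into semi-prime elements with indecomposable support. -/
structure IsDecomposition (a : α) (Ω : Set α) : Prop where
  semiprime : ∀ b ∈ Ω, IsSemiprimeElt b
  nonempty : ∀ b ∈ Ω, (suppSet b).Nonempty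
  disjoint : ∀ b ∈ Ω, ∀ c ∈ Ω, b ≠ c → Disjoint (suppSet b) (suppSet c)
  cover : suppSet a = ⋃ b ∈ Ω, suppSet b
  indecomposable : ∀ b ∈ Ω, IsIndecomposableSet (suppSet b)

theorem IsDecomposition.subset (hL : IsIdealLattice α) {a : α} {Ω Ω' : Set α}
    (h : IsDecomposition a Ω) (h' : IsDecomposition a Ω') : Ω ⊆ Ω' := by
  intro b hb
  obtain ⟨p, hpb⟩ := h.nonempty b hb
  have hbcov : suppSet b ⊆ ⋃ d ∈ Ω', suppSet d :=
    h'.cover ▸ h.cover ▸ Set.subset_biUnion_of_mem (u := suppSet) hb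
  obtain ⟨c, hc, hpc⟩ := Set.mem_iUnion₂.mp (hbcov hpb)
  have hccov : suppSet c ⊆ ⋃ d ∈ Ω, suppSet d :=
    h.cover ▸ h'.cover ▸ Set.subset_biUnion_of_mem (u := suppSet) hc
  have hbc := suppSet_subset_of_indecomposable hL (h.indecomposable b hb)
    (fun d hd => h'.disjoint d hd c hc) hbcov ⟨p, hpb, hpc⟩
  have hcb := suppSet_subset_of_indecomposable hL (h'.indecomposable c hc)
    (fun d hd => h.disjoint d hd b hb) hccov ⟨p, hpc, hpb⟩
  rwa [hL.suppSet_injOn (h.semiprime b hb) (h'.semiprime c hc) (hbc.antisymm hcb)]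

theorem isDecomposition_specComponents [NoetherianSpace (SpecStar α)] (hL : IsIdealLattice α)
    (a : α) : IsDecomposition a
      ((fun p => semiprimeOfSet (specComponent (suppSet a) p)) '' suppSet a) := by
  have hsupp : ∀ p, suppSet (semiprimeOfSet (specComponent (suppSet a) p)) =
      specComponent (suppSet a) p := fun p => suppSet_semiprimeOfSet
    ((isUnionOfClosed_specComponent (isUnionOfClosed_suppSet hL a) p).exists_suppSet_eq hL)
  refine ⟨?_, ?_, ?_, ?_, ?_⟩
  · rintro _ ⟨p, -, rfl⟩
    exact isSemiprimeElt_semiprimeOfSet _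
  · rintro _ ⟨p, hp, rfl⟩
    exact ⟨p, (hsupp p).superset (mem_specComponent_self hp)⟩
  · rintro _ ⟨p, -, rfl⟩ _ ⟨q, -, rfl⟩ hne
    rw [hsupp, hsupp, Set.disjoint_left]
    intro r hpr hqr
    exact hne (congrArg semiprimeOfSet
      (specComponent_eq_of_linked (hpr.2.trans _ _ _ (hqr.2.symm _ _))))
  · rw [Set.biUnion_image]
    simp only [hsupp]
    exact Set.Subset.antisymm
      (fun p hp => Set.mem_biUnion hp (mem_specComponent_self hp))
      (Set.iUnion₂_subset fun p _ q hq => hq.1)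
  · rintro _ ⟨p, -, rfl⟩
    rw [hsupp]
    exact isIndecomposableSet_specComponent _ _

end Support

/-- If `Spec* L` is noetherian, then every semi-prime `a ∈ L` admits a unique
decomposition: there is a unique set `Ω` of semi-prime elements with pairwise disjoint
non-empty supports whose union is `supp(a)`, each of which is indecomposable in the
sense that its support is not a disjoint union of two non-empty subsets which are
unions of closed subsets of `Spec* L`. -/
theorem unique_decomposition_of_semiprime {α : Type*} [CompleteLattice α] [Mul α]
    (hL : IsIdealLattice α)
    (hnoeth : TopologicalSpace.NoetherianSpace (SpecStar α))
    (a : α) (ha : IsSemiprimeElt a) :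
    ∃! Ω : Set α,
      (∀ b ∈ Ω, IsSemiprimeElt b) ∧
      (∀ b ∈ Ω, (suppSet b).Nonempty) ∧
      (∀ b ∈ Ω, ∀ c ∈ Ω, b ≠ c → Disjoint (suppSet b) (suppSet c)) ∧
      suppSet a = ⋃ b ∈ Ω, suppSet b ∧
      ∀ b ∈ Ω, ¬ ∃ Y₁ Y₂ : Set (SpecStar α),
        IsUnionOfClosed Y₁ ∧ IsUnionOfClosed Y₂ ∧
        Y₁.Nonempty ∧ Y₂.Nonempty ∧ Disjoint Y₁ Y₂ ∧
        suppSet b = Y₁ ∪ Y₂ := by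
  have hexists := isDecomposition_specComponents hL a
  refine ⟨_, ⟨hexists.1, hexists.2, hexists.3, hexists.4, hexists.5⟩, ?_⟩
  rintro Ω ⟨h₁, h₂, h₃, h₄, h₅⟩
  have hΩ : IsDecomposition a Ω := ⟨h₁, h₂, h₃, h₄, h₅⟩
  exact (hΩ.subset hL hexists).antisymm (hexists.subset hL hΩ)
end
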